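/- (Fubini–Tonelli for the Riesz construction) Let μ and ν be finite measures on semirings P in X and Q in Y. Then P×Q := {P×Q : P ∈ P, Q ∈ Q} is a semiring in X×Y and (μ×ν)(P×Q) := μ(P)ν(Q) defines a finite measure on it; moreover, for every f ∈ R₂(X×Y) (i.e., whenever the double integral ∫_{X×Y} f d(μ×ν) is defined, possibly infinite), for almost every x the section f(x,·) lies in R₂(Y), the function x ↦ ∫_Y f(x,y) dy lies in R₂(X), and ∫_{X×Y} f dx dy = ∫_X (∫_Y f(x,y) dy) dx. -/

import Mathlib

open Filter Set

/-- A semiring of sets. -/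
structure IsSemiring {X : Type*} (P : Set (Set X)) : Prop where
  empty_mem : ∅ ∈ P
  inter_mem : ∀ ⦃A B : Set X⦄, A ∈ P → B ∈ P → A ∩ B ∈ P
  diff_eq : ∀ ⦃A B : Set X⦄, A ∈ P → B ∈ P →
    ∃ (n : ℕ) (C : Fin n → Set X), (∀ i, C i ∈ P) ∧
      Pairwise (Function.onFun Disjoint C) ∧ A \ B = ⋃ i, C i

/-- A finite (real-valued, nonnegative, σ-additive) measure on a semiring. -/
structure IsPremeasure {X : Type*} (P : Set (Set X)) (m : Set X → ℝ) : Prop where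
  nonneg : ∀ ⦃A : Set X⦄, A ∈ P → 0 ≤ m A
  empty : m ∅ = 0
  sigma_additive : ∀ (A : Set X) (B : ℕ → Set X), A ∈ P → (∀ n, B n ∈ P) →
    Pairwise (Function.onFun Disjoint B) → A = (⋃ n, B n) →
    HasSum (fun n => m (B n)) (m A)

/-- `N` is a null set for the measure `m` on the semiring `P`. -/
def NullFor {X : Type*} (P : Set (Set X)) (m : Set X → ℝ) (N : Set X) : Prop :=
  ∀ ε > 0, ∃ B : ℕ → Set X, (∀ n, B n ∈ P) ∧ N ⊆ (⋃ n, B n) ∧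
    ∃ L : ℝ, HasSum (fun n => m (B n)) L ∧ L < ε

/-- A property holds almost everywhere w.r.t. `(P, m)`. -/
def AEFor {X : Type*} (P : Set (Set X)) (m : Set X → ℝ) (Pr : X → Prop) : Prop :=
  NullFor P m {x | ¬ Pr x}

/-- `φ` is a step function over `P` with elementary integral `v`. -/
def StepIntP {X : Type*} (P : Set (Set X)) (m : Set X → ℝ)
    (φ : X → ℝ) (v : ℝ) : Prop :=
  ∃ (n : ℕ) (c : Fin n → ℝ) (A : Fin n → Set X), (∀ i, A i ∈ P) ∧
    (∀ x, φ x = ∑ i, c i * (A i).indicator 1 x) ∧ v = ∑ i, c i * m (A i)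

/-- `f ∈ R₁` over `(P, m)` with integral `I`: `f` is an a.e. nondecreasing
limit of step functions whose integrals tend to `I`. -/
def R1IntP {X : Type*} (P : Set (Set X)) (m : Set X → ℝ)
    (f : X → EReal) (I : EReal) : Prop :=
  ∃ (φ : ℕ → X → ℝ) (v : ℕ → ℝ), (∀ n, StepIntP P m (φ n) (v n)) ∧
    AEFor P m (fun x => Monotone (fun n => φ n x) ∧
      Tendsto (fun n => (φ n x : EReal)) atTop (nhds (f x))) ∧
    Tendsto (fun n => (v n : EReal)) atTop (nhds I)

/-- `f ∈ R₂` over `(P, m)` with integral `J = I₁ − I₂`. -/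
def R2IntP {X : Type*} (P : Set (Set X)) (m : Set X → ℝ)
    (f : X → EReal) (J : EReal) : Prop :=
  ∃ f₁ f₂ I₁ I₂, R1IntP P m f₁ I₁ ∧ R1IntP P m f₂ I₂ ∧ (I₁ ≠ ⊤ ∨ I₂ ≠ ⊤) ∧
    AEFor P m (fun x => f x = f₁ x - f₂ x) ∧ J = I₁ - I₂

/-- The product semiring of rectangles. -/
def ProdSemiring {X Y : Type*} (P : Set (Set X)) (Q : Set (Set Y)) :
    Set (Set (X × Y)) :=
  {S | ∃ A ∈ P, ∃ B ∈ Q, S = A ×ˢ B}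

/-!
A measure on a semiring extends, by Carathéodory, to a genuine measure with the same null sets, so
the monotone convergence theorem is available for step functions. For a rectangle `A ×ˢ B` the
`ν`-measure of the section at `x` is `ν B` on `A` and `0` elsewhere. Integrating this over `X`
termwise along a countable partition into rectangles gives σ-additivity of the product; along
countable covers of small total mass it shows that almost every section of a null set is null.
Hence an increasing sequence of step functions on `X × Y` has, for almost every `x`, increasing
sections, whose integrals are again an increasing sequence of step functions on `X`: this is the
theorem for `R₁`. Passing to differences, a function of `R₁` with integral `≠ ⊤` is a.e. `≠ ⊤`, so
the partial integrals can be subtracted.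
-/

open MeasureTheory
open scoped ENNReal

section General

theorem hasSum_iff_tsum_ofReal_eq {ι : Type*} {f : ι → ℝ} {a : ℝ} (hf : ∀ i, 0 ≤ f i)
    (ha : 0 ≤ a) : HasSum f a ↔ ∑' i, ENNReal.ofReal (f i) = ENNReal.ofReal a := by
  constructor
  · intro h
    rw [← h.tsum_eq, ENNReal.ofReal_tsum_of_nonneg hf h.summable]
  · intro h
    have hsum : Summable f :=
      (ENNReal.summable_toReal (h ▸ ENNReal.ofReal_ne_top)).congr
        fun i ↦ ENNReal.toReal_ofReal (hf i)
    rw [← ENNReal.ofReal_tsum_of_nonneg hf hsum,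
      ENNReal.ofReal_eq_ofReal_iff (tsum_nonneg hf) ha] at h
    exact h ▸ hsum.hasSum

theorem bddAbove_range_of_tendsto_coe_ereal {v : ℕ → ℝ} {I : EReal}
    (hv : Tendsto (fun n ↦ (v n : EReal)) atTop (nhds I)) (hI : I ≠ ⊤) :
    BddAbove (range v) := by
  obtain ⟨c, hIc, -⟩ := EReal.lt_iff_exists_real_btwn.1 hI.lt_top
  have hvc : ∀ᶠ n in atTop, v n ≤ c :=
    (hv.eventually_lt_const hIc).mono fun n hn ↦ (EReal.coe_lt_coe_iff.1 hn).le
  exact (isBoundedUnder_of_eventually_le hvc).bddAbove_range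

theorem ne_top_of_tendsto_coe_ereal {u : ℕ → ℝ} {a : EReal}
    (hu : Tendsto (fun n ↦ (u n : EReal)) atTop (nhds a)) (hbdd : BddAbove (range u)) :
    a ≠ ⊤ := by
  obtain ⟨c, hc⟩ := hbdd
  have hac : a ≤ c := le_of_tendsto' hu fun n ↦ EReal.coe_le_coe_iff.2 (hc (mem_range_self n))
  exact (hac.trans_lt (EReal.coe_lt_top c)).ne

theorem prod_sdiff_prod_eq_union {X Y : Type*} (A A' : Set X) (B B' : Set Y) :
    A ×ˢ B \ A' ×ˢ B' = (A \ A') ×ˢ B ∪ (A ∩ A') ×ˢ (B \ B') := by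
  ext ⟨x, y⟩
  simp only [Set.mem_sdiff, mem_prod, mem_union, mem_inter_iff]
  tauto

variable {X Y : Type*} {mX : MeasurableSpace X} {mY : MeasurableSpace Y}
  {M : Measure X} {N : Measure Y}

theorem ae_eq_zero_of_forall_exists_measurable_ge {f : X → ℝ≥0∞}
    (hf : ∀ ε > 0, ∃ g : X → ℝ≥0∞, Measurable g ∧ f ≤ g ∧ ∫⁻ x, g x ∂M ≤ ε) :
    f =ᵐ[M] 0 := by
  obtain ⟨ε, -, hε_pos, hε⟩ := exists_seq_strictAnti_tendsto' (zero_lt_one (α := ℝ≥0∞))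
  choose g hg hfg hgε using fun k ↦ hf (ε k) (hε_pos k).1
  have hinf : ∫⁻ x, ⨅ k, g k x ∂M = 0 := le_antisymm
    (ge_of_tendsto' hε fun k ↦ (lintegral_mono fun x ↦ iInf_le _ k).trans (hgε k)) zero_le
  rw [lintegral_eq_zero_iff (Measurable.iInf hg)] at hinf
  filter_upwards [hinf] with x hx
  exact le_antisymm ((le_iInf fun k ↦ hfg k x).trans hx.le) zero_le

theorem ae_bddAbove_range_of_bddAbove_integral {φ : ℕ → X → ℝ} (hφ : ∀ n, Integrable (φ n) M)
    (hmono : ∀ᵐ x ∂M, Monotone fun n ↦ φ n x)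
    (hbdd : BddAbove (range fun n ↦ ∫ x, φ n x ∂M)) :
    ∀ᵐ x ∂M, BddAbove (range fun n ↦ φ n x) := by
  obtain ⟨K, hK⟩ := hbdd
  have hint (n : ℕ) : Integrable (fun x ↦ φ n x - φ 0 x) M := (hφ n).sub (hφ 0)
  have hmeas (n : ℕ) : AEMeasurable (fun x ↦ ENNReal.ofReal (φ n x - φ 0 x)) M :=
    (hint n).aemeasurable.ennreal_ofReal
  have hsup : ∫⁻ x, ⨆ n, ENNReal.ofReal (φ n x - φ 0 x) ∂M
      ≤ ENNReal.ofReal (K - ∫ x, φ 0 x ∂M) := by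
    rw [lintegral_iSup' hmeas]
    · refine iSup_le fun n ↦ ?_
      rw [← ofReal_integral_eq_lintegral_ofReal (hint n), integral_sub (hφ n) (hφ 0)]
      · exact ENNReal.ofReal_le_ofReal (sub_le_sub_right (hK (mem_range_self n)) _)
      · filter_upwards [hmono] with x hx using sub_nonneg.2 (hx n.zero_le)
    · filter_upwards [hmono] with x hx i j hij
      exact ENNReal.ofReal_le_ofReal (sub_le_sub_right (hx hij) _)
  filter_upwards [ae_lt_top' (AEMeasurable.iSup hmeas) (hsup.trans_lt ENNReal.ofReal_lt_top).ne]
    with x hx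
  refine ⟨(⨆ n, ENNReal.ofReal (φ n x - φ 0 x)).toReal + φ 0 x, ?_⟩
  rintro _ ⟨n, rfl⟩
  rw [← sub_le_iff_le_add]
  exact (ENNReal.ofReal_le_iff_le_toReal hx.ne).1
    (le_iSup (fun n ↦ ENNReal.ofReal (φ n x - φ 0 x)) n)

theorem measure_preimage_prodMk_prod (A : Set X) (B : Set Y) (x : X) :
    N (Prod.mk x ⁻¹' A ×ˢ B) = A.indicator (fun _ ↦ N B) x := by
  classical
  rw [mk_preimage_prod_right_eq_if, measure_if]

theorem measurable_measure_preimage_prodMk_prod {A : Set X} (hA : MeasurableSet A) (B : Set Y) :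
    Measurable fun x ↦ N (Prod.mk x ⁻¹' A ×ˢ B) := by
  simp only [measure_preimage_prodMk_prod]
  exact measurable_const.indicator hA

theorem lintegral_measure_preimage_prodMk_prod {A : Set X} (hA : MeasurableSet A) (B : Set Y) :
    ∫⁻ x, N (Prod.mk x ⁻¹' A ×ˢ B) ∂M = M A * N B := by
  simp only [measure_preimage_prodMk_prod]
  rw [lintegral_indicator_const hA, mul_comm]

-- `Measure.prod` is a product only for s-finite measures, so sections are integrated directly.
theorem measure_mul_measure_eq_tsum_of_prod_eq_iUnion {ι : Type*} [Countable ι]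
    {A : Set X} {B : Set Y} {C : ι → Set X} {D : ι → Set Y} (hA : MeasurableSet A)
    (hC : ∀ i, MeasurableSet (C i)) (hD : ∀ i, MeasurableSet (D i))
    (hdisj : Pairwise (Function.onFun Disjoint fun i ↦ C i ×ˢ D i))
    (hAB : A ×ˢ B = ⋃ i, C i ×ˢ D i) :
    M A * N B = ∑' i, M (C i) * N (D i) := by
  have hsection (x : X) :
      N (Prod.mk x ⁻¹' A ×ˢ B) = ∑' i, N (Prod.mk x ⁻¹' C i ×ˢ D i) := by
    classical
    rw [hAB, preimage_iUnion, measure_iUnion]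
    · exact fun i j hij ↦ (hdisj hij).preimage _
    · intro i
      rw [mk_preimage_prod_right_eq_if]
      split_ifs
      exacts [hD i, MeasurableSet.empty]
  simp only [← lintegral_measure_preimage_prodMk_prod hA, hsection,
    ← lintegral_measure_preimage_prodMk_prod (hC _)]
  exact lintegral_tsum fun i ↦ (measurable_measure_preimage_prodMk_prod (hC i) _).aemeasurable

theorem ae_measure_preimage_prodMk_eq_zero_of_forall_exists_cover {Z : Set (X × Y)}
    (hZ : ∀ ε > 0, ∃ (C : ℕ → Set X) (D : ℕ → Set Y), (∀ n, MeasurableSet (C n)) ∧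
      Z ⊆ ⋃ n, C n ×ˢ D n ∧ ∑' n, M (C n) * N (D n) ≤ ε) :
    ∀ᵐ x ∂M, N (Prod.mk x ⁻¹' Z) = 0 := by
  refine ae_eq_zero_of_forall_exists_measurable_ge fun ε hε ↦ ?_
  obtain ⟨C, D, hC, hZCD, hsum⟩ := hZ ε hε
  have hmeas (n : ℕ) : Measurable fun x ↦ N (Prod.mk x ⁻¹' C n ×ˢ D n) :=
    measurable_measure_preimage_prodMk_prod (hC n) (D n)
  refine ⟨fun x ↦ ∑' n, N (Prod.mk x ⁻¹' C n ×ˢ D n), Measurable.tsum hmeas, fun x ↦ ?_, ?_⟩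
  · calc
      N (Prod.mk x ⁻¹' Z) ≤ N (⋃ n, Prod.mk x ⁻¹' C n ×ˢ D n) := by
        rw [← preimage_iUnion]
        exact measure_mono (preimage_mono hZCD)
      _ ≤ ∑' n, N (Prod.mk x ⁻¹' C n ×ˢ D n) := measure_iUnion_le _
  · rw [lintegral_tsum fun n ↦ (hmeas n).aemeasurable]
    simpa only [lintegral_measure_preimage_prodMk_prod (hC _)] using hsum

end General

section CountablyAdditive

variable {X : Type*} {C : Set (Set X)}

theorem apply_iUnion_eq_tsum_of_countable {m : Set X → ℝ≥0∞} (hC : ∅ ∈ C) (hm_empty : m ∅ = 0)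
    (hm : ∀ f : ℕ → Set X, (∀ n, f n ∈ C) → ⋃ n, f n ∈ C →
      Pairwise (Function.onFun Disjoint f) → m (⋃ n, f n) = ∑' n, m (f n))
    {ι : Type*} [Countable ι] {B : ι → Set X} (hB : ∀ i, B i ∈ C) (hB_iUnion : ⋃ i, B i ∈ C)
    (hdisj : Pairwise (Function.onFun Disjoint B)) :
    m (⋃ i, B i) = ∑' i, m (B i) := by
  have : Encodable ι := Encodable.ofCountable ι
  rw [← Encodable.iUnion_decode₂] at hB_iUnion ⊢
  rw [hm _ (fun _ ↦ Encodable.iUnion_decode₂_cases (C := (· ∈ C)) hC hB) hB_iUnion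
    (Encodable.iUnion_decode₂_disjoint_on hdisj)]
  exact tsum_iUnion_decode₂ m hm_empty B

theorem exists_finset_disjointed_eq_sUnion (hC : IsSetSemiring C) {f : ℕ → Set X}
    (hf : ∀ n, f n ∈ C) (n : ℕ) :
    ∃ J : Finset (Set X), ↑J ⊆ C ∧ (J : Set (Set X)).PairwiseDisjoint id ∧
      disjointed f n = ⋃₀ J := by
  classical
  have hI : ↑((Finset.range n).image f) ⊆ C := by
    simpa only [Finset.coe_image] using image_subset_iff.2 fun i _ ↦ hf i
  obtain ⟨J, hJC, hJdisj, hJ⟩ := hC.exists_disjoint_finset_sdiff_eq (hf n) hI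
  refine ⟨J, hJC, hJdisj, hJ ▸ ?_⟩
  ext x
  simp [disjointed_apply]

theorem isSigmaSubadditive_of_iUnion_eq_tsum_of_disjoint (hC : IsSetSemiring C)
    (m : AddContent ℝ≥0∞ C) (hm : ∀ f : ℕ → Set X, (∀ n, f n ∈ C) → ⋃ n, f n ∈ C →
      Pairwise (Function.onFun Disjoint f) → m (⋃ n, f n) = ∑' n, m (f n)) :
    m.IsSigmaSubadditive := by
  intro f hf hf_iUnion
  choose J hJC hJdisj hJ using exists_finset_disjointed_eq_sUnion hC hf
  have hJ_subset {n : ℕ} {A : Set X} (hA : A ∈ J n) : A ⊆ disjointed f n :=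
    hJ n ▸ subset_sUnion_of_mem (Finset.mem_coe.2 hA)
  have hunion : ⋃ n, f n = ⋃ p : Σ n, J n, (p.2 : Set X) := by
    rw [← iUnion_disjointed, iUnion_sigma]
    simp only [hJ, sUnion_eq_iUnion, Finset.coe_sort_coe]
  have hdisj : Pairwise (Function.onFun Disjoint fun p : Σ n, J n ↦ (p.2 : Set X)) := by
    rintro ⟨n, A, hA⟩ ⟨k, B, hB⟩ hne
    rcases eq_or_ne n k with rfl | hnk
    · exact hJdisj n hA hB fun hAB ↦ hne (by subst hAB; rfl)
    · exact (disjoint_disjointed f hnk).mono (hJ_subset hA) (hJ_subset hB)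
  calc
    m (⋃ n, f n) = ∑' p : Σ n, J n, m p.2 := by
      rw [hunion] at hf_iUnion ⊢
      exact apply_iUnion_eq_tsum_of_countable hC.empty_mem addContent_empty hm
        (fun p ↦ hJC p.1 p.2.2) hf_iUnion hdisj
    _ = ∑' n, ∑ A ∈ J n, m A := by
      rw [ENNReal.tsum_sigma']
      exact tsum_congr fun n ↦ Finset.tsum_subtype (J n) m
    _ ≤ ∑' n, m (f n) := ENNReal.tsum_le_tsum fun n ↦
      sum_addContent_le_of_subset hC (hJC n) (hJdisj n) (hf n)
        fun A hA ↦ (hJ_subset hA).trans (disjointed_subset f n)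

end CountablyAdditive

section Semiring

variable {X Y : Type*} {P : Set (Set X)} {Q : Set (Set Y)}

/-- The elementary sets over a family `P`: the finite disjoint unions of members of `P`. They are
written exactly as in `IsSemiring.diff_eq`, which thus says that differences are elementary. -/
def IsElementary {X : Type*} (P : Set (Set X)) (S : Set X) : Prop :=
  ∃ (n : ℕ) (C : Fin n → Set X), (∀ i, C i ∈ P) ∧
    Pairwise (Function.onFun Disjoint C) ∧ S = ⋃ i, C i

theorem IsElementary.union {S T : Set X} (hS : IsElementary P S) (hT : IsElementary P T)
    (hST : Disjoint S T) : IsElementary P (S ∪ T) := by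
  obtain ⟨n, C, hC, hCdisj, rfl⟩ := hS
  obtain ⟨k, D, hD, hDdisj, rfl⟩ := hT
  have hCD (i : Fin n) (j : Fin k) : Disjoint (C i) (D j) :=
    hST.mono (subset_iUnion C i) (subset_iUnion D j)
  let E : Fin n ⊕ Fin k → Set X := Sum.elim C D
  have hEdisj : Pairwise (Function.onFun Disjoint E) := by
    rintro (i | i) (j | j) hij
    · exact hCdisj fun h ↦ hij (congrArg Sum.inl h)
    · exact hCD i j
    · exact (hCD j i).symm
    · exact hDdisj fun h ↦ hij (congrArg Sum.inr h)
  refine ⟨n + k, E ∘ finSumFinEquiv.symm, fun i ↦ ?_,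
    hEdisj.comp_of_injective finSumFinEquiv.symm.injective, ?_⟩
  · exact Sum.forall (p := fun s ↦ E s ∈ P).2 ⟨hC, hD⟩ _
  · exact (iUnion_sum (s := E)).symm.trans (finSumFinEquiv.symm.surjective.iUnion_comp E).symm

theorem IsElementary.prod_left {A : Set X} {T : Set Y} (hA : A ∈ P) (hT : IsElementary Q T) :
    IsElementary (ProdSemiring P Q) (A ×ˢ T) := by
  obtain ⟨n, D, hD, hDdisj, rfl⟩ := hT
  exact ⟨n, fun i ↦ A ×ˢ D i, fun i ↦ ⟨A, hA, D i, hD i, rfl⟩,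
    fun i j hij ↦ (hDdisj hij).set_prod_right A A, prod_iUnion⟩

theorem IsElementary.prod_right {S : Set X} {B : Set Y} (hS : IsElementary P S) (hB : B ∈ Q) :
    IsElementary (ProdSemiring P Q) (S ×ˢ B) := by
  obtain ⟨n, C, hC, hCdisj, rfl⟩ := hS
  exact ⟨n, fun i ↦ C i ×ˢ B, fun i ↦ ⟨C i, hC i, B, hB, rfl⟩,
    fun i j hij ↦ (hCdisj hij).set_prod_left B B, iUnion_prod_const⟩

theorem IsSemiring.prod (hP : IsSemiring P) (hQ : IsSemiring Q) :
    IsSemiring (ProdSemiring P Q) where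
  empty_mem := ⟨∅, hP.empty_mem, ∅, hQ.empty_mem, empty_prod.symm⟩
  inter_mem := by
    rintro _ _ ⟨A, hA, B, hB, rfl⟩ ⟨A', hA', B', hB', rfl⟩
    exact ⟨A ∩ A', hP.inter_mem hA hA', B ∩ B', hQ.inter_mem hB hB', prod_inter_prod⟩
  diff_eq := by
    rintro _ _ ⟨A, hA, B, hB, rfl⟩ ⟨A', hA', B', hB', rfl⟩
    rw [prod_sdiff_prod_eq_union]
    have hleft : IsElementary P (A \ A') := hP.diff_eq hA hA'
    have hright : IsElementary Q (B \ B') := hQ.diff_eq hB hB'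
    exact (hleft.prod_right hB).union (hright.prod_left (hP.inter_mem hA hA'))
      ((disjoint_sdiff_left.mono_right inter_subset_right).set_prod_left _ _)

theorem IsSemiring.isSetSemiring (hP : IsSemiring P) : IsSetSemiring P where
  empty_mem := hP.empty_mem
  inter_mem _ hA _ hB := hP.inter_mem hA hB
  sdiff_eq_sUnion' A hA B hB := by
    classical
    obtain ⟨n, C, hC, hdisj, hAB⟩ := hP.diff_eq hA hB
    refine ⟨Finset.univ.image C, ?_, ?_, ?_⟩ <;>
      simp only [Finset.coe_image, Finset.coe_univ, image_univ]
    · exact range_subset_iff.2 hC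
    · exact hdisj.range_pairwise
    · rw [sUnion_range, hAB]

end Semiring

section Extension

variable {X : Type*} {P : Set (Set X)} {m : Set X → ℝ} {N : Set X}

theorem IsPremeasure.nullFor_iff (hm : IsPremeasure P m) :
    NullFor P m N ↔ ∀ ε : ℝ≥0∞, 0 < ε → ∃ B : ℕ → Set X, (∀ n, B n ∈ P) ∧ N ⊆ ⋃ n, B n ∧
      ∑' n, ENNReal.ofReal (m (B n)) < ε := by
  constructor
  · intro hN ε hε
    obtain ⟨r, hr_pos, hrε⟩ := ENNReal.lt_iff_exists_nnreal_btwn.1 hε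
    obtain ⟨B, hB, hNB, L, hL, hLr⟩ := hN r (ENNReal.coe_pos.1 hr_pos)
    refine ⟨B, hB, hNB, lt_trans ?_ hrε⟩
    have hL_nonneg : 0 ≤ L := hL.nonneg fun n ↦ hm.nonneg (hB n)
    rw [(hasSum_iff_tsum_ofReal_eq (fun n ↦ hm.nonneg (hB n)) hL_nonneg).1 hL]
    exact (ENNReal.ofReal_lt_coe_iff hL_nonneg).2 hLr
  · intro hN ε hε
    obtain ⟨B, hB, hNB, hsum⟩ := hN (ENNReal.ofReal ε) (ENNReal.ofReal_pos.2 hε)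
    have htop := hsum.ne_top
    refine ⟨B, hB, hNB, (∑' n, ENNReal.ofReal (m (B n))).toReal, ?_,
      (ENNReal.lt_ofReal_iff_toReal_lt htop).1 hsum⟩
    rw [hasSum_iff_tsum_ofReal_eq (fun n ↦ hm.nonneg (hB n)) ENNReal.toReal_nonneg,
      ENNReal.ofReal_toReal htop]

/-- The measure `M` extends `m` from the semiring `P` to a σ-algebra containing `P`, and has the
same null sets. The σ-algebra is the one `M` is defined on, and `M N` for a nonmeasurable set `N` is
its outer measure. -/
structure IsMeasureExtension {X : Type*} (P : Set (Set X)) (m : Set X → ℝ)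
    {_ : MeasurableSpace X} (M : Measure X) : Prop where
  measurableSet : ∀ ⦃A : Set X⦄, A ∈ P → MeasurableSet A
  apply_eq : ∀ ⦃A : Set X⦄, A ∈ P → M A = ENNReal.ofReal (m A)
  nullFor_iff : ∀ N : Set X, NullFor P m N ↔ M N = 0

theorem IsMeasureExtension.aeFor_iff {_ : MeasurableSpace X} {M : Measure X}
    (hM : IsMeasureExtension P m M) {p : X → Prop} : AEFor P m p ↔ ∀ᵐ x ∂M, p x :=
  hM.nullFor_iff _

theorem IsPremeasure.ofReal_iUnion_eq_tsum (hm : IsPremeasure P m) {f : ℕ → Set X}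
    (hf : ∀ n, f n ∈ P) (hf_iUnion : ⋃ n, f n ∈ P)
    (hdisj : Pairwise (Function.onFun Disjoint f)) :
    ENNReal.ofReal (m (⋃ n, f n)) = ∑' n, ENNReal.ofReal (m (f n)) :=
  ((hasSum_iff_tsum_ofReal_eq (fun n ↦ hm.nonneg (hf n)) (hm.nonneg hf_iUnion)).1
    (hm.sigma_additive _ f hf_iUnion hf hdisj rfl)).symm

/-- A premeasure on a semiring as an additive content with values in `ℝ≥0∞`, the input of
Carathéodory's extension theorem. -/
noncomputable def IsPremeasure.addContent (hP : IsSemiring P) (hm : IsPremeasure P m) :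
    AddContent ℝ≥0∞ P where
  toFun A := ENNReal.ofReal (m A)
  empty' := by rw [hm.empty, ENNReal.ofReal_zero]
  sUnion' I hI hdisj hI_sUnion := by
    rw [sUnion_eq_iUnion] at hI_sUnion ⊢
    rw [apply_iUnion_eq_tsum_of_countable (m := fun A ↦ ENNReal.ofReal (m A)) hP.empty_mem
      (by rw [hm.empty, ENNReal.ofReal_zero]) (fun _ ↦ hm.ofReal_iUnion_eq_tsum)
      (fun A ↦ hI A.2) hI_sUnion (hdisj.subtype _ _)]
    exact Finset.tsum_subtype I fun A ↦ ENNReal.ofReal (m A)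

theorem IsPremeasure.isSigmaSubadditive_addContent (hP : IsSemiring P) (hm : IsPremeasure P m) :
    (hm.addContent hP).IsSigmaSubadditive :=
  isSigmaSubadditive_of_iUnion_eq_tsum_of_disjoint hP.isSetSemiring _
    fun _ ↦ hm.ofReal_iUnion_eq_tsum

theorem IsPremeasure.inducedOuterMeasure_eq_zero_iff (hP : IsSemiring P)
    (hm : IsPremeasure P m) :
    inducedOuterMeasure (fun A (_ : A ∈ P) ↦ hm.addContent hP A) hP.empty_mem addContent_empty N
      = 0 ↔ NullFor P m N := by
  rw [hm.nullFor_iff, inducedOuterMeasure, OuterMeasure.ofFunction_eq_iInf_mem (P := (· ∈ P)) _ _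
    fun _ ↦ extend_eq_top _, ← nonpos_iff_eq_zero, ← forall_gt_iff_le]
  simp only [iInf_lt_iff, exists_prop]
  refine forall₂_congr fun ε _ ↦ exists_congr fun B ↦ and_congr_right fun hB ↦ ?_
  have hextend (n : ℕ) : extend (fun A (_ : A ∈ P) ↦ hm.addContent hP A) (B n)
      = ENNReal.ofReal (m (B n)) := extend_eq _ (hB n)
  simp only [hextend]

theorem IsPremeasure.exists_isMeasureExtension (hP : IsSemiring P) (hm : IsPremeasure P m) :
    ∃ (_ : MeasurableSpace X) (M : Measure X), IsMeasureExtension P m M := by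
  have hC := hP.isSetSemiring
  have hsub := hm.isSigmaSubadditive_addContent hP
  exact ⟨_, (hm.addContent hP).measureCaratheodory hC hsub,
    { measurableSet := fun A hA ↦
        AddContent.isCaratheodory_inducedOuterMeasure_of_mem hC (hm.addContent hP) hA
      apply_eq := fun A hA ↦ AddContent.measureCaratheodory_eq _ hC hsub hA
      nullFor_iff := fun N ↦ (hm.inducedOuterMeasure_eq_zero_iff hP).symm }⟩

end Extension

section StepFunction

variable {X : Type*} {P : Set (Set X)} {m : Set X → ℝ}

theorem AEFor.mono {p q : X → Prop} (hp : AEFor P m p) (hpq : ∀ x, p x → q x) : AEFor P m q := by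
  intro ε hε
  obtain ⟨B, hB, hpB, hsum⟩ := hp ε hε
  exact ⟨B, hB, fun x hx ↦ hpB (mt (hpq x) hx), hsum⟩

theorem IsMeasureExtension.integrable_indicator_one {_ : MeasurableSpace X} {M : Measure X}
    (hM : IsMeasureExtension P m M) {A : Set X} (hA : A ∈ P) :
    Integrable (A.indicator (1 : X → ℝ)) M :=
  (integrable_indicator_iff (hM.measurableSet hA)).2
    (integrableOn_const (hM.apply_eq hA ▸ ENNReal.ofReal_ne_top))

theorem StepIntP.integrable {φ : X → ℝ} {v : ℝ} (hφ : StepIntP P m φ v) {_ : MeasurableSpace X}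
    {M : Measure X} (hM : IsMeasureExtension P m M) : Integrable φ M := by
  obtain ⟨n, c, A, hA, hφ, -⟩ := hφ
  rw [funext hφ]
  exact integrable_finsetSum _ fun i _ ↦ (hM.integrable_indicator_one (hA i)).const_mul (c i)

theorem StepIntP.integral_eq {φ : X → ℝ} {v : ℝ} (hφ : StepIntP P m φ v) (hm : IsPremeasure P m)
    {_ : MeasurableSpace X} {M : Measure X} (hM : IsMeasureExtension P m M) :
    ∫ x, φ x ∂M = v := by
  obtain ⟨n, c, A, hA, hφ, rfl⟩ := hφ
  have hmA (i : Fin n) : ∫ x, (A i).indicator (1 : X → ℝ) x ∂M = m (A i) := by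
    rw [integral_indicator_one (hM.measurableSet (hA i)), Measure.real, hM.apply_eq (hA i),
      ENNReal.toReal_ofReal (hm.nonneg (hA i))]
  simp only [hφ, ← hmA, ← integral_const_mul]
  exact integral_finsetSum _ fun i _ ↦ (hM.integrable_indicator_one (hA i)).const_mul (c i)

theorem StepIntP.monotone_of_ae_monotone (hP : IsSemiring P) (hm : IsPremeasure P m)
    {φ : ℕ → X → ℝ} {v : ℕ → ℝ} (hφ : ∀ n, StepIntP P m (φ n) (v n))
    (hmono : AEFor P m fun x ↦ Monotone fun n ↦ φ n x) : Monotone v := by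
  obtain ⟨_, M, hM⟩ := hm.exists_isMeasureExtension hP
  intro i j hij
  rw [← (hφ i).integral_eq hm hM, ← (hφ j).integral_eq hm hM]
  refine integral_mono_ae ((hφ i).integrable hM) ((hφ j).integrable hM) ?_
  filter_upwards [hM.aeFor_iff.1 hmono] with x hx using hx hij

theorem R1IntP.ae_ne_top (hP : IsSemiring P) (hm : IsPremeasure P m) {f : X → EReal} {I : EReal}
    (hf : R1IntP P m f I) (hI : I ≠ ⊤) : AEFor P m fun x ↦ f x ≠ ⊤ := by
  obtain ⟨φ, v, hφ, hφf, hv⟩ := hf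
  obtain ⟨_, M, hM⟩ := hm.exists_isMeasureExtension hP
  rw [hM.aeFor_iff] at hφf ⊢
  have hbdd : BddAbove (range fun n ↦ ∫ x, φ n x ∂M) := by
    simpa only [(hφ _).integral_eq hm hM] using bddAbove_range_of_tendsto_coe_ereal hv hI
  filter_upwards [hφf, ae_bddAbove_range_of_bddAbove_integral (fun n ↦ (hφ n).integrable hM)
    (hφf.mono fun x hx ↦ hx.1) hbdd] with x hx hx_bdd
  exact ne_top_of_tendsto_coe_ereal hx.2 hx_bdd

end StepFunction

section Product

variable {X Y : Type*} {P : Set (Set X)} {Q : Set (Set Y)} {μ : Set X → ℝ} {ν : Set Y → ℝ}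

/-- The product of two premeasures as a function of all sets, obtained from the two projections of
a set; only its values on rectangles matter. -/
def prodPremeasure {X Y : Type*} (μ : Set X → ℝ) (ν : Set Y → ℝ) (S : Set (X × Y)) : ℝ :=
  μ (Prod.fst '' S) * ν (Prod.snd '' S)

theorem prodPremeasure_prod (hμ : μ ∅ = 0) (hν : ν ∅ = 0) (A : Set X) (B : Set Y) :
    prodPremeasure μ ν (A ×ˢ B) = μ A * ν B := by
  rw [prodPremeasure]
  rcases A.eq_empty_or_nonempty with rfl | hA
  · simp [hμ]
  rcases B.eq_empty_or_nonempty with rfl | hB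
  · simp [hν]
  rw [fst_image_prod A hB, snd_image_prod hA B]

theorem IsPremeasure.ofReal_prodPremeasure_prod (hμ : IsPremeasure P μ) (hν : IsPremeasure Q ν)
    {_ : MeasurableSpace X} {_ : MeasurableSpace Y} {M : Measure X} {N : Measure Y}
    (hM : IsMeasureExtension P μ M) (hN : IsMeasureExtension Q ν N)
    {A : Set X} {B : Set Y} (hA : A ∈ P) (hB : B ∈ Q) :
    ENNReal.ofReal (prodPremeasure μ ν (A ×ˢ B)) = M A * N B := by
  rw [prodPremeasure_prod hμ.empty hν.empty, ENNReal.ofReal_mul (hμ.nonneg hA), hM.apply_eq hA,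
    hN.apply_eq hB]

theorem IsPremeasure.prod (hP : IsSemiring P) (hQ : IsSemiring Q) (hμ : IsPremeasure P μ)
    (hν : IsPremeasure Q ν) : IsPremeasure (ProdSemiring P Q) (prodPremeasure μ ν) := by
  have hnonneg : ∀ ⦃S⦄, S ∈ ProdSemiring P Q → 0 ≤ prodPremeasure μ ν S := by
    rintro _ ⟨A, hA, B, hB, rfl⟩
    rw [prodPremeasure_prod hμ.empty hν.empty]
    exact mul_nonneg (hμ.nonneg hA) (hν.nonneg hB)
  refine ⟨hnonneg, by simp [prodPremeasure, hμ.empty], fun S T hS hT hdisj hST ↦ ?_⟩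
  rw [hasSum_iff_tsum_ofReal_eq (fun n ↦ hnonneg (hT n)) (hnonneg hS)]
  obtain ⟨A, hA, B, hB, rfl⟩ := hS
  choose C hC D hD hCD using hT
  obtain rfl : T = fun n ↦ C n ×ˢ D n := funext hCD
  obtain ⟨_, M, hM⟩ := hμ.exists_isMeasureExtension hP
  obtain ⟨_, N, hN⟩ := hν.exists_isMeasureExtension hQ
  simp only [hμ.ofReal_prodPremeasure_prod hν hM hN hA hB,
    hμ.ofReal_prodPremeasure_prod hν hM hN (hC _) (hD _)]
  exact (measure_mul_measure_eq_tsum_of_prod_eq_iUnion (hM.measurableSet hA)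
    (fun n ↦ hM.measurableSet (hC n)) (fun n ↦ hN.measurableSet (hD n)) hdisj hST).symm

theorem AEFor.ae_ae_of_prod (hP : IsSemiring P) (hQ : IsSemiring Q) (hμ : IsPremeasure P μ)
    (hν : IsPremeasure Q ν) {p : X × Y → Prop}
    (hp : AEFor (ProdSemiring P Q) (prodPremeasure μ ν) p) :
    AEFor P μ fun x ↦ AEFor Q ν fun y ↦ p (x, y) := by
  obtain ⟨_, M, hM⟩ := hμ.exists_isMeasureExtension hP
  obtain ⟨_, N, hN⟩ := hν.exists_isMeasureExtension hQ
  simp only [hM.aeFor_iff, hN.aeFor_iff]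
  refine ae_measure_preimage_prodMk_eq_zero_of_forall_exists_cover (Z := {z | ¬ p z}) fun ε hε ↦ ?_
  obtain ⟨S, hS, hpS, hsum⟩ := (hμ.prod hP hQ hν).nullFor_iff.1 hp ε hε
  choose C hC D hD hCD using hS
  obtain rfl : S = fun n ↦ C n ×ˢ D n := funext hCD
  simp only [hμ.ofReal_prodPremeasure_prod hν hM hN (hC _) (hD _)] at hsum
  exact ⟨C, D, fun n ↦ hM.measurableSet (hC n), hpS, hsum.le⟩

theorem StepIntP.exists_section (hμ : μ ∅ = 0) (hν : ν ∅ = 0) {φ : X × Y → ℝ} {v : ℝ}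
    (hφ : StepIntP (ProdSemiring P Q) (prodPremeasure μ ν) φ v) :
    ∃ Φ : X → ℝ, (∀ x, StepIntP Q ν (fun y ↦ φ (x, y)) (Φ x)) ∧ StepIntP P μ Φ v := by
  obtain ⟨n, c, S, hS, hφ, rfl⟩ := hφ
  choose C hC D hD hCD using hS
  obtain rfl : S = fun i ↦ C i ×ˢ D i := funext hCD
  refine ⟨fun x ↦ ∑ i, (c i * ν (D i)) * (C i).indicator 1 x, fun x ↦
    ⟨n, fun i ↦ c i * (C i).indicator 1 x, D, hD, fun y ↦ ?_, ?_⟩,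
    n, fun i ↦ c i * ν (D i), C, hC, fun x ↦ rfl, ?_⟩
  · simp only [hφ, indicator_prod_one, mul_assoc]
  · exact Finset.sum_congr rfl fun i _ ↦ mul_right_comm _ _ _
  · simp only [prodPremeasure_prod hμ hν, mul_comm (μ _), mul_assoc]

theorem R1IntP.exists_section (hP : IsSemiring P) (hQ : IsSemiring Q) (hμ : IsPremeasure P μ)
    (hν : IsPremeasure Q ν) {f : X × Y → EReal} {I : EReal}
    (hf : R1IntP (ProdSemiring P Q) (prodPremeasure μ ν) f I) :
    ∃ g : X → EReal, AEFor P μ (fun x ↦ R1IntP Q ν (fun y ↦ f (x, y)) (g x)) ∧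
      R1IntP P μ g I := by
  obtain ⟨φ, v, hφ, hφf, hv⟩ := hf
  choose Φ hφΦ hΦ using fun n ↦ (hφ n).exists_section hμ.empty hν.empty
  have hsection := AEFor.ae_ae_of_prod hP hQ hμ hν hφf
  have hΦmono {x : X} (hx : AEFor Q ν fun y ↦ Monotone (fun n ↦ φ n (x, y)) ∧
      Tendsto (fun n ↦ (φ n (x, y) : EReal)) atTop (nhds (f (x, y)))) :
      Monotone fun n ↦ Φ n x :=
    StepIntP.monotone_of_ae_monotone hQ hν (hφΦ · x) (hx.mono fun y hy ↦ hy.1)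
  have hΦtendsto {x : X} (hx : Monotone fun n ↦ Φ n x) :
      Tendsto (fun n ↦ (Φ n x : EReal)) atTop (nhds (⨆ n, (Φ n x : EReal))) :=
    tendsto_atTop_iSup (EReal.coe_strictMono.monotone.comp hx)
  refine ⟨fun x ↦ ⨆ n, (Φ n x : EReal), hsection.mono fun x hx ↦ ?_, Φ, v, hΦ,
    hsection.mono fun x hx ↦ ⟨hΦmono hx, hΦtendsto (hΦmono hx)⟩, hv⟩
  exact ⟨fun n y ↦ φ n (x, y), (Φ · x), (hφΦ · x), hx, hΦtendsto (hΦmono hx)⟩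

theorem R2IntP.exists_section (hP : IsSemiring P) (hQ : IsSemiring Q) (hμ : IsPremeasure P μ)
    (hν : IsPremeasure Q ν) {f : X × Y → EReal} {J : EReal}
    (hf : R2IntP (ProdSemiring P Q) (prodPremeasure μ ν) f J) :
    ∃ g : X → EReal, AEFor P μ (fun x ↦ R2IntP Q ν (fun y ↦ f (x, y)) (g x)) ∧
      R2IntP P μ g J := by
  obtain ⟨f₁, f₂, I₁, I₂, hf₁, hf₂, hI, hf, rfl⟩ := hf
  obtain ⟨g₁, hfg₁, hg₁⟩ := hf₁.exists_section hP hQ hμ hν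
  obtain ⟨g₂, hfg₂, hg₂⟩ := hf₂.exists_section hP hQ hμ hν
  have hsection := AEFor.ae_ae_of_prod hP hQ hμ hν hf
  have hfinite : AEFor P μ fun x ↦ g₁ x ≠ ⊤ ∨ g₂ x ≠ ⊤ := hI.elim
    (fun hI₁ ↦ (hg₁.ae_ne_top hP hμ hI₁).mono fun _ ↦ Or.inl)
    (fun hI₂ ↦ (hg₂.ae_ne_top hP hμ hI₂).mono fun _ ↦ Or.inr)
  obtain ⟨_, M, hM⟩ := hμ.exists_isMeasureExtension hP
  refine ⟨fun x ↦ g₁ x - g₂ x, hM.aeFor_iff.2 ?_, g₁, g₂, I₁, I₂, hg₁, hg₂, hI,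
    hM.aeFor_iff.2 (ae_of_all M fun _ ↦ rfl), rfl⟩
  filter_upwards [hM.aeFor_iff.1 hfg₁, hM.aeFor_iff.1 hfg₂, hM.aeFor_iff.1 hfinite,
    hM.aeFor_iff.1 hsection] with x hx₁ hx₂ hx_finite hx
  exact ⟨_, _, g₁ x, g₂ x, hx₁, hx₂, hx_finite, hx, rfl⟩

end Product

/-- Fubini–Tonelli theorem for the Riesz construction: the rectangles form a
semiring, `(μ×ν)(A×B) := μ(A)ν(B)` defines a finite measure on it, and for
every `f ∈ R₂(X×Y)` (possibly infinite double integral `J`), for a.e. `x` the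
section `f(x,·)` lies in `R₂(Y)`, the partial-integral function lies in
`R₂(X)`, and the successive integral equals `J`. -/
theorem fubini_tonelli {X Y : Type*} (P : Set (Set X)) (Q : Set (Set Y))
    (μ : Set X → ℝ) (ν : Set Y → ℝ)
    (hP : IsSemiring P) (hQ : IsSemiring Q)
    (hμ : IsPremeasure P μ) (hν : IsPremeasure Q ν) :
    IsSemiring (ProdSemiring P Q) ∧
    ∃ π : Set (X × Y) → ℝ,
      (∀ A ∈ P, ∀ B ∈ Q, π (A ×ˢ B) = μ A * ν B) ∧
      IsPremeasure (ProdSemiring P Q) π ∧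
      ∀ (f : X × Y → EReal) (J : EReal),
        R2IntP (ProdSemiring P Q) π f J →
        ∃ g : X → EReal,
          AEFor P μ (fun x => R2IntP Q ν (fun y => f (x, y)) (g x)) ∧
          R2IntP P μ g J := by
  exact ⟨hP.prod hQ, prodPremeasure μ ν,
    fun A _ B _ ↦ prodPremeasure_prod hμ.empty hν.empty A B, hμ.prod hP hQ hν,
    fun _ _ hf ↦ hf.exists_section hP hQ hμ hν⟩
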